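/- Consider the n-player one-way deterministic communication game where player i holds a bit b_i ∈ {0,1}, players speak in order 1, 2, ..., n (each sending a message to the next player depending on their bit and the received message), and player n must output a (1+ε)-multiplicative approximation to Σ_i b_i (with output 0 allowed only when the sum is 0), for a fixed constant ε > 0. Then the maximum message length over all players is Ω(log n). -/

import Mathlib

/-- The message held after the first `t` players have spoken: player `t+1`
(0-indexed `t`) sends `next t m b t`, depending on its index, its bit, and the
received message. The message space has size `2^s` (messages of length `s`). -/
def runProtocol {M : Type} (next : ℕ → M → Bool → M) (start : M) (b : ℕ → Bool) : ℕ → M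
  | 0 => start
  | t + 1 => next t (runProtocol next start b t) (b t)

/-- Number of ones among the first `t` bits. -/
def onesCount (b : ℕ → Bool) (t : ℕ) : ℕ := ((Finset.range t).filter fun i => b i).card

/-- State `v` is reachable after `t` players with exactly `k` ones. -/
def Reach {M : Type} (next : ℕ → M → Bool → M) (start : M) (t : ℕ) (v : M) (k : ℕ) : Prop :=
  ∃ b : ℕ → Bool, runProtocol next start b t = v ∧ onesCount b t = k

theorem run_congr {M : Type} (next : ℕ → M → Bool → M) (start : M) (b b' : ℕ → Bool) (t : ℕ)
    (h : ∀ i < t, b i = b' i) : runProtocol next start b t = runProtocol next start b' t := by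
  induction t with
  | zero => rfl
  | succ t ih =>
    simp only [runProtocol]
    rw [ih (fun i hi => h i (by omega)), h t (by omega)]

theorem onesCount_succ (b : ℕ → Bool) (t : ℕ) :
    onesCount b (t + 1) = onesCount b t + (b t).toNat := by
  unfold onesCount
  rw [Finset.range_add_one, Finset.filter_insert]
  cases h : b t <;> simp

theorem onesCount_congr (b b' : ℕ → Bool) (t : ℕ) (h : ∀ i < t, b i = b' i) :
    onesCount b t = onesCount b' t := by
  unfold onesCount
  congr 1
  apply Finset.filter_congr
  intro i hi
  rw [h i (Finset.mem_range.1 hi)]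

theorem Reach.step {M : Type} {next : ℕ → M → Bool → M} {start : M} {t : ℕ} {v : M} {k : ℕ}
    (h : Reach next start t v k) (β : Bool) :
    Reach next start (t + 1) (next t v β) (k + β.toNat) := by
  obtain ⟨b, hb, hk⟩ := h
  have hag : ∀ i < t, Function.update b t β i = b i := fun i hi => by
    rw [Function.update_of_ne (by omega)]
  refine ⟨Function.update b t β, ?_, ?_⟩
  · simp only [runProtocol]
    rw [run_congr next start _ b t hag, hb]
    simp
  · rw [onesCount_succ, onesCount_congr _ b t hag, hk]
    simp

theorem Reach.le {M : Type} {next : ℕ → M → Bool → M} {start : M} {t : ℕ} {v : M} {k : ℕ}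
    (h : Reach next start t v k) : k ≤ t := by
  obtain ⟨b, -, rfl⟩ := h
  unfold onesCount
  exact (Finset.card_filter_le _ _).trans (by simp)

/-- Counts that can be confused, at level `t`, with a count at most `x`. -/
def confSet {M : Type} (next : ℕ → M → Bool → M) (start : M) (t x : ℕ) : Set ℕ :=
  {k' | ∃ v k, k ≤ x ∧ Reach next start t v k ∧ Reach next start t v k'}

theorem confSet_nonempty {M : Type} (next : ℕ → M → Bool → M) (start : M) (t x : ℕ) :
    (confSet next start t x).Nonempty :=
  have h : Reach next start t (runProtocol next start (fun _ => false) t) 0 :=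
    ⟨fun _ => false, rfl, by simp [onesCount]⟩
  ⟨0, _, 0, Nat.zero_le _, h, h⟩

theorem confSet_bdd {M : Type} (next : ℕ → M → Bool → M) (start : M) (t x : ℕ) :
    BddAbove (confSet next start t x) :=
  ⟨t, by rintro k' ⟨v, k, -, -, h⟩; exact h.le⟩

/-- The largest count that can be confused with a count at most `x`. -/
noncomputable def topCount {M : Type} (next : ℕ → M → Bool → M) (start : M) (t x : ℕ) : ℕ :=
  sSup (confSet next start t x)

theorem topCount_mem {M : Type} (next : ℕ → M → Bool → M) (start : M) (t x : ℕ) :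
    topCount next start t x ∈ confSet next start t x :=
  Nat.sSup_mem (confSet_nonempty next start t x) (confSet_bdd next start t x)

theorem le_topCount {M : Type} {next : ℕ → M → Bool → M} {start : M} {t x k : ℕ}
    (h : k ∈ confSet next start t x) : k ≤ topCount next start t x :=
  le_csSup (confSet_bdd next start t x) h

theorem topCount_mono_time {M : Type} (next : ℕ → M → Bool → M) (start : M) (t x : ℕ) :
    topCount next start t x ≤ topCount next start (t + 1) x := by
  obtain ⟨v, k, hk, h1, h2⟩ := topCount_mem next start t x
  exact le_topCount ⟨_, k, hk, h1.step false, h2.step false⟩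

theorem topCount_step {M : Type} (next : ℕ → M → Bool → M) (start : M) (t x : ℕ) :
    topCount next start t x + 1 ≤ topCount next start (t + 1) (x + 1) := by
  obtain ⟨v, k, hk, h1, h2⟩ := topCount_mem next start t x
  exact le_topCount ⟨_, k + 1, by omega, h1.step true, h2.step true⟩

/-- With `w` states, `topCount` cannot be strictly increasing on `0, …, w`. -/
theorem exists_flat {w : ℕ} (next : ℕ → Fin w → Bool → Fin w) (start : Fin w) (t : ℕ) :
    ∃ x < w, topCount next start t (x + 1) ≤ topCount next start t x := by
  by_contra! hcon
  have hlt : ∀ x y, x < y → y ≤ w → topCount next start t x < topCount next start t y := by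
    intro x y hxy
    induction y, hxy using Nat.le_induction with
    | base => intro h; exact hcon x (by omega)
    | succ y hy ih => intro h; exact (ih (by omega)).trans (hcon y (by omega))
  choose v k hk h1 h2 using fun x => topCount_mem next start t x
  have hne : ∀ x y, x < y → y ≤ w → v x ≠ v y := by
    intro x y hxy hy he
    have h3 := h2 y
    rw [← he] at h3
    exact absurd (le_topCount ⟨v x, k x, hk x, h1 x, h3⟩) (not_le.2 (hlt x y hxy hy))
  have hinj : Function.Injective (fun i : Fin (w + 1) => v i) := by
    intro i j hij
    by_contra hne'
    rcases lt_or_gt_of_ne hne' with h | h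
    · exact hne i j h (by omega) hij
    · exact hne j i h (by omega) hij.symm
  have := Fintype.card_le_of_injective _ hinj
  simp at this

theorem potential {w : ℕ} (next : ℕ → Fin w → Bool → Fin w) (start : Fin w) (t : ℕ) :
    t ≤ ∑ x ∈ Finset.range (w + 1), topCount next start t x := by
  induction t with
  | zero => exact Nat.zero_le _
  | succ t ih =>
    refine Nat.succ_le_of_lt (ih.trans_lt ?_)
    obtain ⟨x, hx, hle⟩ := exists_flat next start t
    refine Finset.sum_lt_sum (fun i _ => topCount_mono_time next start t i)
      ⟨x + 1, by simpa using hx, ?_⟩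
    have := topCount_step next start t x
    omega

/-- In the `n`-player one-way deterministic communication game
where player `i` holds a bit `b_i`, players speak in order, and the last player
must output a `(1+ε)`-multiplicative approximation to `Σ_i b_i` (outputting `0`
only when the sum is `0`), the maximum message length `s` is `Ω(log n)`. -/
theorem stmt_15 (ε : ℝ) (hε : 0 < ε) :
    ∃ c : ℝ, 0 < c ∧
      ∀ (n s : ℕ), 1 ≤ n →
        ∀ (next : ℕ → Fin (2 ^ s) → Bool → Fin (2 ^ s)) (start : Fin (2 ^ s))
          (out : Fin (2 ^ s) → ℕ),
          (∀ b : ℕ → Bool,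
            ((out (runProtocol next start b n) : ℝ) ≤
              (1 + ε) * (((Finset.range n).filter fun i => b i).card : ℝ)) ∧
            ((((Finset.range n).filter fun i => b i).card : ℝ) ≤
              (1 + ε) * (out (runProtocol next start b n) : ℝ)) ∧
            (out (runProtocol next start b n) = 0 →
              ((Finset.range n).filter fun i => b i).card = 0)) →
          c * Real.log n ≤ (s : ℝ) := by
  have h1 : 0 < Real.log (2 * (1 + ε) ^ 2) := Real.log_pos (by nlinarith)
  have h2 : 0 < Real.log 2 := Real.log_pos (by norm_num)
  refine ⟨1 / (Real.log (2 * (1 + ε) ^ 2) + 2 * Real.log 2), by positivity, ?_⟩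
  intro n s hn next start out H
  have hs : 1 ≤ s := by
    by_contra hs
    obtain rfl : s = 0 := by omega
    have hA := (H (fun _ => false)).1
    have hB := (H (fun _ => true)).2.2
    have hsub : ∀ a b : Fin (2 ^ 0), a = b := fun a b => by
      apply Fin.ext
      have ha := a.2
      have hb := b.2
      simp only [pow_zero] at ha hb
      omega
    rw [hsub (runProtocol next start (fun _ => true) n)
      (runProtocol next start (fun _ => false) n)] at hB
    have h0 : out (runProtocol next start (fun _ => false) n) = 0 := by
      simp at hA
      exact_mod_cast hA
    have := hB h0
    simp at this
    omega
  have htop : ∀ x, (topCount next start n x : ℝ) ≤ (1 + ε) ^ 2 * x := by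
    intro x
    obtain ⟨v, k, hk, ⟨b, hb, hbk⟩, ⟨b', hb', hbk'⟩⟩ := topCount_mem next start n x
    have hA := (H b).1
    have hB := (H b').2.1
    rw [hb] at hA
    rw [hb'] at hB
    unfold onesCount at hbk hbk'
    rw [hbk] at hA
    rw [hbk'] at hB
    have hkx : (k : ℝ) ≤ x := by exact_mod_cast hk
    calc _ ≤ (1 + ε) * (out v : ℝ) := hB
      _ ≤ (1 + ε) * ((1 + ε) * k) := by gcongr
      _ ≤ (1 + ε) * ((1 + ε) * x) := by gcongr
      _ = _ := by ring
  have hw : (1 : ℝ) ≤ (2 : ℝ) ^ s := one_le_pow₀ (by norm_num)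
  have hmain : (n : ℝ) ≤ 2 * (1 + ε) ^ 2 * ((2 : ℝ) ^ s) ^ 2 := by
    have hp : (n : ℝ) ≤ ∑ x ∈ Finset.range (2 ^ s + 1), (topCount next start n x : ℝ) := by
      exact_mod_cast potential next start n
    refine hp.trans ?_
    have hq : ∑ x ∈ Finset.range (2 ^ s + 1), (topCount next start n x : ℝ) ≤
        (2 ^ s + 1 : ℕ) • ((1 + ε) ^ 2 * (2 : ℝ) ^ s) := by
      have := Finset.sum_le_card_nsmul (Finset.range (2 ^ s + 1))
        (fun x => (topCount next start n x : ℝ)) ((1 + ε) ^ 2 * (2 : ℝ) ^ s) (by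
          intro x hx
          refine (htop x).trans ?_
          have hx' : x ≤ 2 ^ s := by
            have := Finset.mem_range.1 hx
            omega
          have : (x : ℝ) ≤ (2 : ℝ) ^ s := by exact_mod_cast hx'
          gcongr)
      simpa only [Finset.card_range] using this
    refine hq.trans ?_
    rw [nsmul_eq_mul]
    push_cast
    calc ((2 : ℝ) ^ s + 1) * ((1 + ε) ^ 2 * (2 : ℝ) ^ s)
        ≤ ((2 : ℝ) ^ s + (2 : ℝ) ^ s) * ((1 + ε) ^ 2 * (2 : ℝ) ^ s) := by gcongr
      _ = _ := by ring
  have hn' : (0 : ℝ) < n := by exact_mod_cast hn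
  have hlog := Real.log_le_log hn' hmain
  rw [Real.log_mul (by positivity) (by positivity), Real.log_pow, Real.log_pow] at hlog
  have hs' : (1 : ℝ) ≤ s := by exact_mod_cast hs
  rw [one_div, inv_mul_le_iff₀ (by positivity)]
  push_cast at hlog
  nlinarith
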